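/- For every A ∈ ℝ and every p₀ ∈ ℝ² ∖ {(0,0)}, the infimum of E_H(γ) over locally Lipschitz curves γ : [a,b] → ℝ² with γ(a) = p₀, γ(b) = (0,0) and 𝒜(γ) = A is attained; the minimizer is unique up to orientation-preserving reparametrization; the minimizing curve satisfies γ(t) ≠ (0,0) for all t < b (it meets the origin only at its terminal endpoint); and its Euclidean arclength is finite: ∫ₐᵇ |γ'(t)| dt ≤ C for a constant C depending only on λ₁, λ₂, p₀ and A. -/

import Mathlib

open MeasureTheory Set Filter Topology
open scoped ENNReal

noncomputable section

/-- The Euclidean norm of a vector in `ℝ × ℝ`. -/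
def enorm2 (v : ℝ × ℝ) : ℝ := Real.sqrt (v.1 ^ 2 + v.2 ^ 2)

/-- The degenerate length `E(γ) = ∫ₐᵇ F(γ(t)) |γ'(t)| dt` of a planar curve. -/
def degLen (F : ℝ × ℝ → ℝ) (a b : ℝ) (γ : ℝ → ℝ × ℝ) : ℝ :=
  ∫ t in a..b, F (γ t) * enorm2 (deriv γ t)

/-- The signed area `𝒜(γ) = ∫ₐᵇ γ¹(t) (γ²)'(t) dt` of a planar curve. -/
def sArea (a b : ℝ) (γ : ℝ → ℝ × ℝ) : ℝ :=
  ∫ t in a..b, (γ t).1 * deriv (fun s => (γ s).2) t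

/-- A locally Lipschitz curve on `[a,b]` joining `p` to `q`. -/
def IsCurve (a b : ℝ) (γ : ℝ → ℝ × ℝ) (p q : ℝ × ℝ) : Prop :=
  a ≤ b ∧ LocallyLipschitz γ ∧ γ a = p ∧ γ b = q

/-- The homogeneous conformal factor `F_H(p) = √(λ₁²p₁² + λ₂²p₂²)`. -/
def FH (l1 l2 : ℝ) (p : ℝ × ℝ) : ℝ := Real.sqrt (l1 ^ 2 * p.1 ^ 2 + l2 ^ 2 * p.2 ^ 2)

/-- Two curves are equal up to an orientation-preserving reparametrization. -/
def SameCurve (a1 b1 : ℝ) (γ1 : ℝ → ℝ × ℝ) (a2 b2 : ℝ) (γ2 : ℝ → ℝ × ℝ) : Prop :=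
  ∃ φ : ℝ → ℝ, MonotoneOn φ (Set.Icc a1 b1) ∧ ContinuousOn φ (Set.Icc a1 b1) ∧
    φ a1 = a2 ∧ φ b1 = b2 ∧ ∀ t ∈ Set.Icc a1 b1, γ1 t = γ2 (φ t)

/-!
The proof is a calibration argument. Put `Λ = diag (l1, l2)`, let `J` be the rotation by a right
angle, and for `T : ℝ` consider the linear field `V = (I + T J) Λ`. Then `|V| = √(1 + T²) F_H`, and
`⟨V, dp⟩ = dG + T (l1 + l2) p¹ dp²` for a quadratic function `G`. Hence Cauchy–Schwarz in the form
`|V| |γ'| ≥ -⟨V, γ'⟩` bounds `√(1 + T²) E_H(γ)` from below by a quantity which depends only on the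
endpoints and the signed area of `γ`, with equality exactly when `γ` runs along `-V`.

Since `⟨Λ p, p⟩` decays exponentially along `-V`, the flow line of `-V` from `p₀` spirals into the
origin; its signed area is an affine function of `T` with nonzero slope, so some `T` realizes the
prescribed area `A`, and this flow line is a minimizer. Any other minimizer has equality in
Cauchy–Schwarz almost everywhere, so it solves `γ' = -σ V(γ)` with `σ ≥ 0` as long as it stays away
from the origin; it therefore traces the same flow line, and `⟨Λ p, p⟩`, which decreases strictly
along the latter, provides the monotone change of parameter.
-/

section LocallyLipschitzCurves

theorem absolutelyContinuousOnInterval_of_locallyLipschitz {X : Type*} [PseudoMetricSpace X]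
    {f : ℝ → X} (hf : LocallyLipschitz f) (a b : ℝ) : AbsolutelyContinuousOnInterval f a b :=
  (hf.locallyLipschitzOn.exists_lipschitzOnWith_of_compact isCompact_uIcc).elim
    fun _ hK ↦ hK.absolutelyContinuousOnInterval

theorem absolutelyContinuousOnInterval_prodMk {X Y : Type*} [PseudoMetricSpace X]
    [PseudoMetricSpace Y] {f : ℝ → X} {g : ℝ → Y} {a b : ℝ}
    (hf : AbsolutelyContinuousOnInterval f a b) (hg : AbsolutelyContinuousOnInterval g a b) :
    AbsolutelyContinuousOnInterval (fun t ↦ (f t, g t)) a b := by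
  refine squeeze_zero (fun _ ↦ Finset.sum_nonneg fun _ _ ↦ dist_nonneg) (fun I ↦ ?_)
    (by simpa only [add_zero] using Tendsto.add hf hg)
  rw [← Finset.sum_add_distrib]
  exact Finset.sum_le_sum fun _ _ ↦ max_le_add_of_nonneg dist_nonneg dist_nonneg

theorem absolutelyContinuousOnInterval_comp_of_locallyLipschitz {X Y : Type*}
    [SeminormedAddCommGroup X] [PseudoMetricSpace Y] {g : X → Y} (hg : LocallyLipschitz g)
    {f : ℝ → X} {a b : ℝ} (hf : AbsolutelyContinuousOnInterval f a b) :
    AbsolutelyContinuousOnInterval (g ∘ f) a b := by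
  obtain ⟨K, hK⟩ := hg.locallyLipschitzOn.exists_lipschitzOnWith_of_compact
    (isCompact_uIcc.image_of_continuousOn hf.continuousOn)
  have hlim := Tendsto.const_mul (K : ℝ) hf
  rw [mul_zero] at hlim
  refine squeeze_zero' (.of_forall fun _ ↦ Finset.sum_nonneg fun _ _ ↦ dist_nonneg) ?_ hlim
  filter_upwards [mem_inf_of_right (mem_principal_self _)] with I hI
  rw [Finset.mul_sum]
  exact Finset.sum_le_sum fun i hi ↦
    hK.dist_le_mul _ (mem_image_of_mem f (hI.1 i hi).1) _ (mem_image_of_mem f (hI.1 i hi).2)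

variable {V : Type*} [NormedAddCommGroup V] [NormedSpace ℝ V] {γ : ℝ → V}

theorem ae_hasDerivAt_of_locallyLipschitz [FiniteDimensional ℝ V] (hγ : LocallyLipschitz γ) :
    ∀ᵐ t, HasDerivAt γ (deriv γ t) t := by
  have hbv : LocallyBoundedVariationOn γ univ := fun a b _ _ ↦
    (absolutelyContinuousOnInterval_of_locallyLipschitz hγ a b).boundedVariationOn.mono
      (inter_subset_right.trans Icc_subset_uIcc)
  exact hbv.ae_differentiableAt.mono fun _ ht ↦ ht.hasDerivAt

theorem intervalIntegrable_deriv_of_locallyLipschitz [CompleteSpace V] (hγ : LocallyLipschitz γ)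
    (a b : ℝ) : IntervalIntegrable (deriv γ) volume a b := by
  obtain ⟨K, hK⟩ := hγ.locallyLipschitzOn.exists_lipschitzOnWith_of_compact
    (isCompact_Icc (a := min a b - 1) (b := max a b + 1))
  refine (intervalIntegrable_const (c := (K : ℝ))).mono_fun'
    (aestronglyMeasurable_deriv γ _) ?_
  filter_upwards [ae_restrict_mem measurableSet_uIoc] with t ht
  exact norm_deriv_le_of_lipschitzOn (Icc_mem_nhds (by linarith [ht.1]) (by linarith [ht.2])) hK

theorem antitoneOn_of_ae_deriv_nonpos {f : ℝ → ℝ} {a b : ℝ} (hf : LocallyLipschitz f)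
    (hf' : ∀ᵐ t, t ∈ Icc a b → deriv f t ≤ 0) : AntitoneOn f (Icc a b) := by
  intro s hs t ht hst
  rw [← sub_nonpos,
    ← (absolutelyContinuousOnInterval_of_locallyLipschitz hf s t).integral_deriv_eq_sub,
    ← neg_nonneg, ← intervalIntegral.integral_neg]
  refine intervalIntegral.integral_nonneg_of_ae_restrict hst ?_
  filter_upwards [ae_restrict_of_ae hf', ae_restrict_mem measurableSet_Icc] with r hr hrst
  exact neg_nonneg.2 <| hr ⟨hs.1.trans hrst.1, hrst.2.trans ht.2⟩

end LocallyLipschitzCurves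

section CauchySchwarzGap

theorem enorm2_eq_norm_toLp (v : ℝ × ℝ) : enorm2 v = ‖WithLp.toLp 2 v‖ := by
  simp [enorm2, WithLp.prod_norm_eq_of_L2]

theorem enorm2_nonneg (v : ℝ × ℝ) : 0 ≤ enorm2 v := Real.sqrt_nonneg _

theorem enorm2_ne_zero {v : ℝ × ℝ} (hv : v ≠ 0) : enorm2 v ≠ 0 := by
  rw [enorm2_eq_norm_toLp, norm_ne_zero_iff]
  exact fun h ↦ hv ((WithLp.toLp_eq_zero 2).1 h)

theorem enorm2_smul (c : ℝ) (v : ℝ × ℝ) : enorm2 (c • v) = |c| * enorm2 v := by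
  simp only [enorm2_eq_norm_toLp, WithLp.toLp_smul, norm_smul, Real.norm_eq_abs]

theorem continuous_enorm2 : Continuous enorm2 := by
  unfold enorm2
  fun_prop

/-- The defect `|u| |v| + ⟨u, v⟩` in the Cauchy–Schwarz inequality `-⟨u, v⟩ ≤ |u| |v|`. -/
def cauchySchwarzGap (u v : ℝ × ℝ) : ℝ := enorm2 u * enorm2 v + (u.1 * v.1 + u.2 * v.2)

theorem cauchySchwarzGap_eq_sub_inner (u v : ℝ × ℝ) :
    cauchySchwarzGap u v = ‖WithLp.toLp 2 u‖ * ‖WithLp.toLp 2 (-v)‖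
      - inner ℝ (WithLp.toLp 2 u) (WithLp.toLp 2 (-v)) := by
  rw [cauchySchwarzGap, enorm2_eq_norm_toLp, enorm2_eq_norm_toLp, WithLp.toLp_neg, norm_neg,
    inner_neg_right, sub_neg_eq_add]
  simp [WithLp.prod_inner_apply, mul_comm]

theorem cauchySchwarzGap_nonneg (u v : ℝ × ℝ) : 0 ≤ cauchySchwarzGap u v := by
  rw [cauchySchwarzGap_eq_sub_inner, sub_nonneg]
  exact real_inner_le_norm _ _

theorem cauchySchwarzGap_neg_smul_self {k : ℝ} (hk : 0 ≤ k) (u : ℝ × ℝ) :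
    cauchySchwarzGap u (-k • u) = 0 := by
  rw [cauchySchwarzGap_eq_sub_inner, neg_smul, neg_neg, WithLp.toLp_smul, norm_smul,
    Real.norm_of_nonneg hk, inner_smul_right, real_inner_self_eq_norm_mul_norm]
  ring

theorem eq_neg_smul_of_cauchySchwarzGap_eq_zero {u v : ℝ × ℝ} (hu : u ≠ 0)
    (hgap : cauchySchwarzGap u v = 0) : v = -(enorm2 v / enorm2 u) • u := by
  rw [cauchySchwarzGap_eq_sub_inner, sub_eq_zero, eq_comm, inner_eq_norm_mul_iff_real,
    ← WithLp.toLp_smul, ← WithLp.toLp_smul, WithLp.toLp_neg, norm_neg, ← enorm2_eq_norm_toLp,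
    ← enorm2_eq_norm_toLp] at hgap
  have hgap' : enorm2 v • u = enorm2 u • -v := WithLp.toLp_injective 2 hgap
  rw [neg_smul, div_eq_inv_mul, mul_smul, hgap', inv_smul_smul₀ (enorm2_ne_zero hu), neg_neg]

theorem intervalIntegrable_enorm2_deriv {γ : ℝ → ℝ × ℝ} (hγ : LocallyLipschitz γ) (a b : ℝ) :
    IntervalIntegrable (fun t ↦ enorm2 (deriv γ t)) volume a b := by
  have hγ' := intervalIntegrable_deriv_of_locallyLipschitz hγ a b
  let toLp : ℝ × ℝ →L[ℝ] WithLp 2 (ℝ × ℝ) := (WithLp.prodContinuousLinearEquiv 2 ℝ ℝ ℝ).symm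
  simp only [enorm2_eq_norm_toLp]
  exact ⟨(toLp.integrable_comp hγ'.1).norm, (toLp.integrable_comp hγ'.2).norm⟩

end CauchySchwarzGap

section LinearFlow

variable {E : Type*} [NormedAddCommGroup E] [NormedSpace ℝ E] (N : E →L[ℝ] E)

/-- The time-`s` map `exp (s N)` of the flow of the linear equation `x' = N x`. -/
def linearFlow (s : ℝ) : E →L[ℝ] E := NormedSpace.exp (s • N)

@[simp]
theorem linearFlow_zero : linearFlow N 0 = 1 := by
  simp only [linearFlow, zero_smul, NormedSpace.exp_zero]

variable [CompleteSpace E]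

theorem linearFlow_neg_apply_linearFlow (s : ℝ) (p : E) :
    linearFlow N (-s) (linearFlow N s p) = p := by
  let _ : NormedAlgebra ℚ (E →L[ℝ] E) := .restrictScalars ℚ ℝ _
  have hcomm : Commute (-s • N) (s • N) := ((Commute.refl N).smul_left _).smul_right _
  have hinv : linearFlow N (-s) * linearFlow N s = 1 := by
    rw [linearFlow, linearFlow, ← NormedSpace.exp_add_of_commute hcomm, neg_smul,
      neg_add_cancel, NormedSpace.exp_zero]
  exact DFunLike.congr_fun hinv p

theorem linearFlow_apply_ne_zero {p : E} (hp : p ≠ 0) (s : ℝ) : linearFlow N s p ≠ 0 :=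
  fun h ↦ hp <| by rw [← linearFlow_neg_apply_linearFlow N s p, h, map_zero]

theorem hasDerivAt_linearFlow (s : ℝ) :
    HasDerivAt (linearFlow N) (linearFlow N s * N) s :=
  hasDerivAt_exp_smul_const N s

theorem hasDerivAt_linearFlow_apply (p : E) (s : ℝ) :
    HasDerivAt (fun u ↦ linearFlow N u p) (N (linearFlow N s p)) s := by
  simpa only [map_zero, add_zero] using!
    (hasDerivAt_exp_smul_const' N s).clm_apply (hasDerivAt_const s p)

theorem contDiff_linearFlow : ContDiff ℝ 1 (linearFlow N) := by
  have hdiff : Differentiable ℝ (linearFlow N) :=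
    fun s ↦ (hasDerivAt_linearFlow N s).differentiableAt
  refine contDiff_one_iff_deriv.2 ⟨hdiff, ?_⟩
  rw [funext fun s ↦ (hasDerivAt_linearFlow N s).deriv]
  exact hdiff.continuous.mul continuous_const

theorem eq_linearFlow_of_ae_hasDerivAt {γ : ℝ → E} {σ : ℝ → ℝ} {a b : ℝ}
    (hγ : AbsolutelyContinuousOnInterval γ a b) (hσ : IntervalIntegrable σ volume a b)
    (hγ' : ∀ᵐ t, t ∈ uIcc a b → HasDerivAt γ (σ t • N (γ t)) t) :
    γ b = linearFlow N (∫ t in a..b, σ t) (γ a) := by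
  -- Transporting back along the flow, `exp (-τ N) γ` with `τ' = σ` has zero derivative.
  set τ : ℝ → ℝ := fun t ↦ ∫ r in b..t, σ r
  have hflow : LocallyLipschitz fun x : ℝ × E ↦ linearFlow N (-x.1) x.2 :=
    (((contDiff_linearFlow N).comp contDiff_fst.neg).clm_apply contDiff_snd).locallyLipschitz
  have hτ : AbsolutelyContinuousOnInterval τ a b :=
    hσ.absolutelyContinuousOnInterval_intervalIntegral right_mem_uIcc
  have hac := absolutelyContinuousOnInterval_comp_of_locallyLipschitz hflow
    (absolutelyContinuousOnInterval_prodMk hτ hγ)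
  have hderiv : ∀ᵐ t, t ∈ uIcc a b → HasDerivAt (fun t ↦ linearFlow N (-τ t) (γ t)) 0 t := by
    filter_upwards [hσ.ae_hasDerivAt_integral, hγ'] with t hτt hγt ht
    have hflowt : HasDerivAt (fun t ↦ linearFlow N (-τ t)) (-σ t • (linearFlow N (-τ t) * N)) t :=
      HasDerivAt.scomp (h := fun t ↦ -τ t) t (hasDerivAt_linearFlow N (-τ t))
        (hτt ht b right_mem_uIcc).fun_neg
    simpa using hflowt.clm_apply (hγt ht)
  obtain ⟨c, hc⟩ := hac.const_of_ae_hasDerivAt_zero hderiv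
  calc γ b = linearFlow N (-τ b) (γ b) := by simp [τ]
    _ = linearFlow N (-τ a) (γ a) := (hc b right_mem_uIcc).trans (hc a left_mem_uIcc).symm
    _ = linearFlow N (∫ t in a..b, σ t) (γ a) := by rw [intervalIntegral.integral_symm b a]

end LinearFlow

section DecayArc

variable {E : Type*} [NormedAddCommGroup E] [NormedSpace ℝ E] (N : E →L[ℝ] E)

/-- The backward trajectory `s ↦ exp (-s N) p` of `p`, reparametrized by `s = -(2 / m) log (1 - t)`
so as to reach the origin at time `t = 1`. If the trajectory decays like `exp (-m s)`, this
choice makes the arc decay like `(1 - t) ^ 2`, hence `C¹` across `t = 1`. -/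
def decayArc (m : ℝ) (p : E) (t : ℝ) : E :=
  if t < 1 then linearFlow N (2 / m * Real.log (1 - t)) p else 0

variable {N} {m C t : ℝ} {p : E}

theorem decayArc_of_lt (ht : t < 1) :
    decayArc N m p t = linearFlow N (2 / m * Real.log (1 - t)) p := if_pos ht

theorem decayArc_of_one_le (ht : 1 ≤ t) : decayArc N m p t = 0 := if_neg ht.not_gt

theorem decayArc_zero_right : decayArc N m p 0 = p := by
  simp [decayArc_of_lt]

variable (N p) in
theorem exists_decayArc_eq_linearFlow_neg (hm : 0 < m) {s : ℝ} (hs : 0 ≤ s) :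
    ∃ t ∈ Ico 0 1, decayArc N m p t = linearFlow N (-s) p := by
  refine ⟨1 - Real.exp (-(m / 2 * s)), ⟨?_, ?_⟩, ?_⟩
  · exact sub_nonneg.2 (Real.exp_le_one_iff.2 (neg_nonpos.2 (by positivity)))
  · exact sub_lt_self 1 (Real.exp_pos _)
  · rw [decayArc_of_lt (sub_lt_self 1 (Real.exp_pos _)), sub_sub_cancel, Real.log_exp]
    congr 2
    field_simp

variable (N m p) in
/-- The velocity of `decayArc N m p`. For `1 ≤ t` it vanishes because the arc does, so the junk
value of the factor `2 / m / (1 - t)` at `t = 1` is harmless. -/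
def decayArcVelocity (t : ℝ) : E := -(2 / m / (1 - t)) • N (decayArc N m p t)

theorem decayArc_ne_zero [CompleteSpace E] (hp : p ≠ 0) (ht : t < 1) : decayArc N m p t ≠ 0 := by
  rw [decayArc_of_lt ht]
  exact linearFlow_apply_ne_zero N hp _

theorem hasDerivAt_decayArc_of_ne_one [CompleteSpace E] (ht : t ≠ 1) :
    HasDerivAt (decayArc N m p) (decayArcVelocity N m p t) t := by
  rcases ht.lt_or_gt with ht1 | ht1
  · have hlog : HasDerivAt (fun r ↦ 2 / m * Real.log (1 - r)) (-(2 / m / (1 - t))) t :=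
      (((HasDerivAt.const_sub 1 (hasDerivAt_id t)).log (sub_pos.2 ht1).ne').const_mul
        (2 / m)).congr_deriv (by rw [id, neg_div, mul_neg, mul_one_div])
    rw [decayArcVelocity, decayArc_of_lt ht1]
    refine ((hasDerivAt_linearFlow_apply N p _).scomp t hlog).congr_of_eventuallyEq ?_
    filter_upwards [Iio_mem_nhds ht1] with r hr using decayArc_of_lt hr
  · rw [decayArcVelocity, decayArc_of_one_le ht1.le, map_zero, smul_zero]
    refine (hasDerivAt_const t 0).congr_of_eventuallyEq ?_
    filter_upwards [Ioi_mem_nhds ht1] with r hr using decayArc_of_one_le (le_of_lt hr)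

section Decay

variable (hm : 0 < m)
  (hdecay : ∀ s, 0 ≤ s → ‖linearFlow N (-s) p‖ ≤ C * Real.exp (-(m * s)))
include hm hdecay

theorem norm_decayArc_le (ht : 0 ≤ t) : ‖decayArc N m p t‖ ≤ C * (1 - t) ^ 2 := by
  rcases lt_or_ge t 1 with ht1 | ht1
  · have hlog : Real.log (1 - t) ≤ 0 := Real.log_nonpos (by linarith) (by linarith)
    have hexp : Real.exp (-(m * -(2 / m * Real.log (1 - t)))) = (1 - t) ^ 2 := by
      rw [← Real.exp_log (sub_pos.2 ht1), ← Real.exp_nat_mul, Real.exp_log (sub_pos.2 ht1)]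
      congr 1
      field_simp
      norm_num [mul_comm]
    have := hdecay (-(2 / m * Real.log (1 - t)))
      (neg_nonneg.2 (mul_nonpos_of_nonneg_of_nonpos (by positivity) hlog))
    rwa [neg_neg, hexp, ← decayArc_of_lt ht1] at this
  · have hC : 0 ≤ C := by simpa using (norm_nonneg _).trans (hdecay 0 le_rfl)
    rw [decayArc_of_one_le ht1, norm_zero]
    positivity

theorem continuousAt_decayArc_one : ContinuousAt (decayArc N m p) 1 := by
  have hlim : Tendsto (fun t : ℝ ↦ C * (1 - t) ^ 2) (𝓝 1) (𝓝 0) :=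
    Continuous.tendsto' (by fun_prop) _ _ (by simp)
  rw [ContinuousAt, decayArc_of_one_le le_rfl]
  refine squeeze_zero_norm' ?_ hlim
  filter_upwards [Ioi_mem_nhds one_pos] with t ht using norm_decayArc_le hm hdecay (le_of_lt ht)

theorem continuousAt_decayArcVelocity_one : ContinuousAt (decayArcVelocity N m p) 1 := by
  have hlim : Tendsto (fun t : ℝ ↦ 2 / m * (‖N‖ * (C * |1 - t|))) (𝓝 1) (𝓝 0) :=
    Continuous.tendsto' (by fun_prop) _ _ (by simp)
  rw [ContinuousAt, decayArcVelocity, decayArc_of_one_le le_rfl, map_zero, smul_zero]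
  refine squeeze_zero_norm' ?_ hlim
  filter_upwards [Ioi_mem_nhds one_pos] with t ht
  calc ‖decayArcVelocity N m p t‖ = 2 / m / |1 - t| * ‖N (decayArc N m p t)‖ := by
        rw [decayArcVelocity, norm_smul, norm_neg, norm_div, Real.norm_of_nonneg (by positivity),
          Real.norm_eq_abs]
    _ ≤ 2 / m / |1 - t| * (‖N‖ * (C * (1 - t) ^ 2)) := by
        gcongr
        exact N.le_opNorm_of_le (norm_decayArc_le hm hdecay (le_of_lt ht))
    _ = 2 / m * (‖N‖ * (C * (|1 - t| ^ 2 / |1 - t|))) := by rw [sq_abs]; ring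
    _ = 2 / m * (‖N‖ * (C * |1 - t|)) := by rw [sq, mul_self_div_self]

variable [CompleteSpace E]

theorem hasDerivAt_decayArc (t : ℝ) :
    HasDerivAt (decayArc N m p) (decayArcVelocity N m p t) t :=
  hasDerivAt_of_hasDerivAt_of_ne' (fun _ ↦ hasDerivAt_decayArc_of_ne_one)
    (continuousAt_decayArc_one hm hdecay) (continuousAt_decayArcVelocity_one hm hdecay) t

theorem contDiff_decayArc : ContDiff ℝ 1 (decayArc N m p) := by
  have hdiff : Differentiable ℝ (decayArc N m p) :=
    fun t ↦ (hasDerivAt_decayArc hm hdecay t).differentiableAt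
  refine contDiff_one_iff_deriv.2 ⟨hdiff, ?_⟩
  rw [funext fun t ↦ (hasDerivAt_decayArc hm hdecay t).deriv, continuous_iff_continuousAt]
  intro t
  rcases eq_or_ne t 1 with rfl | ht
  · exact continuousAt_decayArcVelocity_one hm hdecay
  · have hden : ContinuousAt (fun r : ℝ ↦ -(2 / m / (1 - r))) t :=
      (continuousAt_const.div (by fun_prop) (sub_ne_zero.2 ht.symm)).neg
    exact hden.smul (N.continuous.comp hdiff.continuous).continuousAt

end Decay

end DecayArc

section Components

variable {E F : Type*} [NormedAddCommGroup E] [NormedSpace ℝ E] [NormedAddCommGroup F]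
  [NormedSpace ℝ F] {γ : ℝ → E × F} {v : E × F} {t : ℝ}

theorem hasDerivAt_fst (hγ : HasDerivAt γ v t) : HasDerivAt (fun s ↦ (γ s).1) v.1 t :=
  (ContinuousLinearMap.fst ℝ E F).hasFDerivAt.comp_hasDerivAt t hγ

theorem hasDerivAt_snd (hγ : HasDerivAt γ v t) : HasDerivAt (fun s ↦ (γ s).2) v.2 t :=
  (ContinuousLinearMap.snd ℝ E F).hasFDerivAt.comp_hasDerivAt t hγ

end Components

section SpiralField

variable (l1 l2 T : ℝ)

/-- The linear field `V = (I + T J) Λ`, where `Λ = diag (l1, l2)` and `J` is the rotation by a right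
angle. Minimizers of the degenerate length at fixed area follow the flow lines of `-V`, the
parameter `T` playing the role of the Lagrange multiplier of the area constraint. -/
def spiralField : ℝ × ℝ →L[ℝ] ℝ × ℝ :=
  (l1 • ContinuousLinearMap.fst ℝ ℝ ℝ - (T * l2) • ContinuousLinearMap.snd ℝ ℝ ℝ).prod
    ((T * l1) • ContinuousLinearMap.fst ℝ ℝ ℝ + l2 • ContinuousLinearMap.snd ℝ ℝ ℝ)

@[simp]
theorem spiralField_apply (p : ℝ × ℝ) :
    spiralField l1 l2 T p = (l1 * p.1 - T * l2 * p.2, T * l1 * p.1 + l2 * p.2) := by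
  simp [spiralField]

/-- The quadratic form `⟨Λ p, p⟩`, a Lyapunov function for the flow of `-spiralField l1 l2 T`. -/
def quadWell (p : ℝ × ℝ) : ℝ := l1 * p.1 ^ 2 + l2 * p.2 ^ 2

/-- The quadratic function `G` with `dG = ⟨V, dp⟩ - T (l1 + l2) p¹ dp²`, where
`V = spiralField l1 l2 T`. -/
def spiralPotential (p : ℝ × ℝ) : ℝ := quadWell l1 l2 p / 2 - T * l2 * (p.1 * p.2)

/-- A quadratic function whose increment along a flow line of `spiralField l1 l2 T` is the signed
area swept. -/
def areaPotential (p : ℝ × ℝ) : ℝ :=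
  (T * quadWell l1 l2 p + 2 * l2 * (p.1 * p.2)) / (2 * (l1 + l2))

theorem enorm2_spiralField (p : ℝ × ℝ) :
    enorm2 (spiralField l1 l2 T p) = √(1 + T ^ 2) * FH l1 l2 p := by
  rw [enorm2, FH, ← Real.sqrt_mul (by positivity), spiralField_apply]
  congr 1
  ring

theorem FH_nonneg (p : ℝ × ℝ) : 0 ≤ FH l1 l2 p := Real.sqrt_nonneg _

theorem FH_sq (p : ℝ × ℝ) : FH l1 l2 p ^ 2 = l1 ^ 2 * p.1 ^ 2 + l2 ^ 2 * p.2 ^ 2 :=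
  Real.sq_sqrt (by positivity)

theorem continuous_FH : Continuous (FH l1 l2) := by
  unfold FH
  fun_prop

theorem quadWell_zero : quadWell l1 l2 0 = 0 := by
  simp [quadWell]

theorem contDiff_quadWell : ContDiff ℝ 1 (quadWell l1 l2) := by
  unfold quadWell
  fun_prop

theorem contDiff_spiralPotential : ContDiff ℝ 1 (spiralPotential l1 l2 T) := by
  have := contDiff_quadWell l1 l2
  unfold spiralPotential
  fun_prop

theorem contDiff_areaPotential : ContDiff ℝ 1 (areaPotential l1 l2 T) := by
  have := contDiff_quadWell l1 l2
  unfold areaPotential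
  fun_prop

section Derivatives

variable {γ : ℝ → ℝ × ℝ} {v : ℝ × ℝ} {t k : ℝ}

theorem hasDerivAt_quadWell (hγ : HasDerivAt γ v t) :
    HasDerivAt (fun s ↦ quadWell l1 l2 (γ s))
      (2 * (l1 * ((γ t).1 * v.1) + l2 * ((γ t).2 * v.2))) t :=
  ((((hasDerivAt_fst hγ).fun_pow 2).const_mul l1).add
    (((hasDerivAt_snd hγ).fun_pow 2).const_mul l2)).congr_deriv (by push_cast; ring)

theorem hasDerivAt_spiralPotential (hγ : HasDerivAt γ v t) :
    HasDerivAt (fun s ↦ spiralPotential l1 l2 T (γ s))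
      ((spiralField l1 l2 T (γ t)).1 * v.1 + (spiralField l1 l2 T (γ t)).2 * v.2
        - T * (l1 + l2) * ((γ t).1 * v.2)) t :=
  (((hasDerivAt_quadWell l1 l2 hγ).div_const 2).sub
    (((hasDerivAt_fst hγ).mul (hasDerivAt_snd hγ)).const_mul (T * l2))).congr_deriv (by
      rw [spiralField_apply]; ring)

variable {l1 l2 T}

theorem hasDerivAt_quadWell_of_smul_spiralField
    (hγ : HasDerivAt γ (-k • spiralField l1 l2 T (γ t)) t) :
    HasDerivAt (fun s ↦ quadWell l1 l2 (γ s)) (-(2 * k * FH l1 l2 (γ t) ^ 2)) t :=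
  (hasDerivAt_quadWell l1 l2 hγ).congr_deriv (by
    rw [FH_sq, spiralField_apply]
    simp only [Prod.smul_mk, smul_eq_mul]
    ring)

theorem hasDerivAt_areaPotential_of_smul_spiralField (hl : l1 + l2 ≠ 0)
    (hγ : HasDerivAt γ (k • spiralField l1 l2 T (γ t)) t) :
    HasDerivAt (fun s ↦ areaPotential l1 l2 T (γ s))
      ((γ t).1 * (k • spiralField l1 l2 T (γ t)).2) t :=
  ((((hasDerivAt_quadWell l1 l2 hγ).const_mul T).add
    (((hasDerivAt_fst hγ).mul (hasDerivAt_snd hγ)).const_mul (2 * l2))).div_const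
      (2 * (l1 + l2))).congr_deriv (by
    rw [spiralField_apply]
    simp only [Prod.smul_mk, smul_eq_mul]
    field_simp
    ring)

theorem sArea_eq_sub_areaPotential {a b : ℝ} {k : ℝ → ℝ} (hl : l1 + l2 ≠ 0)
    (hγ : LocallyLipschitz γ) (hγ' : ∀ t, HasDerivAt γ (k t • spiralField l1 l2 T (γ t)) t) :
    sArea a b γ = areaPotential l1 l2 T (γ b) - areaPotential l1 l2 T (γ a) := by
  have hlip := (contDiff_areaPotential l1 l2 T).locallyLipschitz.comp hγ
  calc sArea a b γ = ∫ t in a..b, deriv (areaPotential l1 l2 T ∘ γ) t :=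
        intervalIntegral.integral_congr fun t _ ↦ by
          rw [(hasDerivAt_snd (hγ' t)).deriv]
          exact (hasDerivAt_areaPotential_of_smul_spiralField hl (hγ' t)).deriv.symm
    _ = areaPotential l1 l2 T (γ b) - areaPotential l1 l2 T (γ a) :=
        (absolutelyContinuousOnInterval_of_locallyLipschitz hlip a b).integral_deriv_eq_sub

end Derivatives

end SpiralField

section Calibration

variable (l1 l2 T a b : ℝ) (γ : ℝ → ℝ × ℝ)

/-- The excess of `√(1 + T ^ 2) * degLen (FH l1 l2) a b γ` over its lower bound `-∫ ⟨V, γ'⟩`, where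
`V = spiralField l1 l2 T`. For fixed endpoints and signed area that bound is a constant. -/
def calibrationDefect : ℝ :=
  ∫ t in a..b, cauchySchwarzGap (spiralField l1 l2 T (γ t)) (deriv γ t)

/-- The velocity of `γ` is almost everywhere on `[a, b]` a nonpositive multiple of
`spiralField l1 l2 T` (or the field vanishes), expressed by equality in the Cauchy–Schwarz
inequality. -/
def IsCalibrated : Prop :=
  ∀ᵐ t, t ∈ Icc a b → cauchySchwarzGap (spiralField l1 l2 T (γ t)) (deriv γ t) = 0

variable {l1 l2 T a b γ}

theorem cauchySchwarzGap_spiralField_deriv {t : ℝ} (hγ : HasDerivAt γ (deriv γ t) t) :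
    cauchySchwarzGap (spiralField l1 l2 T (γ t)) (deriv γ t) =
      √(1 + T ^ 2) * (FH l1 l2 (γ t) * enorm2 (deriv γ t))
        + deriv (spiralPotential l1 l2 T ∘ γ) t
        + T * (l1 + l2) * ((γ t).1 * deriv (fun s ↦ (γ s).2) t) := by
  have hG : deriv (spiralPotential l1 l2 T ∘ γ) t = _ :=
    (hasDerivAt_spiralPotential l1 l2 T hγ).deriv
  rw [cauchySchwarzGap, enorm2_spiralField, hG, (hasDerivAt_snd hγ).deriv]
  ring

section LocallyLipschitz

variable (l1 l2 T a b) (hγ : LocallyLipschitz γ)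
include hγ

theorem intervalIntegrable_FH_mul_enorm2_deriv :
    IntervalIntegrable (fun t ↦ FH l1 l2 (γ t) * enorm2 (deriv γ t)) volume a b :=
  (intervalIntegrable_enorm2_deriv hγ a b).continuousOn_mul
    ((continuous_FH l1 l2).comp hγ.continuous).continuousOn

theorem intervalIntegrable_fst_mul_deriv_snd :
    IntervalIntegrable (fun t ↦ (γ t).1 * deriv (fun s ↦ (γ s).2) t) volume a b :=
  (intervalIntegrable_deriv_of_locallyLipschitz
    (LipschitzWith.prod_snd.locallyLipschitz.comp hγ) a b).continuousOn_mul
      hγ.continuous.fst.continuousOn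

theorem absolutelyContinuousOnInterval_spiralPotential_comp :
    AbsolutelyContinuousOnInterval (spiralPotential l1 l2 T ∘ γ) a b :=
  absolutelyContinuousOnInterval_of_locallyLipschitz
    ((contDiff_spiralPotential l1 l2 T).locallyLipschitz.comp hγ) a b

theorem intervalIntegrable_cauchySchwarzGap :
    IntervalIntegrable (fun t ↦ cauchySchwarzGap (spiralField l1 l2 T (γ t)) (deriv γ t))
      volume a b := by
  have hlen := (intervalIntegrable_FH_mul_enorm2_deriv l1 l2 a b hγ).const_mul (√(1 + T ^ 2))
  have hG := absolutelyContinuousOnInterval_spiralPotential_comp l1 l2 T a b hγ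
  have harea := (intervalIntegrable_fst_mul_deriv_snd a b hγ).const_mul (T * (l1 + l2))
  refine ((hlen.add hG.intervalIntegrable_deriv).add harea).congr_ae ?_
  filter_upwards [ae_restrict_of_ae (ae_hasDerivAt_of_locallyLipschitz hγ)] with t ht
  exact (cauchySchwarzGap_spiralField_deriv ht).symm

variable {l1 l2 T a b}

theorem calibrationDefect_eq :
    calibrationDefect l1 l2 T a b γ = √(1 + T ^ 2) * degLen (FH l1 l2) a b γ
      + (spiralPotential l1 l2 T (γ b) - spiralPotential l1 l2 T (γ a))
      + T * (l1 + l2) * sArea a b γ := by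
  have hlen := (intervalIntegrable_FH_mul_enorm2_deriv l1 l2 a b hγ).const_mul (√(1 + T ^ 2))
  have hG := absolutelyContinuousOnInterval_spiralPotential_comp l1 l2 T a b hγ
  have harea := (intervalIntegrable_fst_mul_deriv_snd a b hγ).const_mul (T * (l1 + l2))
  calc calibrationDefect l1 l2 T a b γ
      = ∫ t in a..b, (√(1 + T ^ 2) * (FH l1 l2 (γ t) * enorm2 (deriv γ t))
          + deriv (spiralPotential l1 l2 T ∘ γ) t
          + T * (l1 + l2) * ((γ t).1 * deriv (fun s ↦ (γ s).2) t)) :=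
        intervalIntegral.integral_congr_ae
          ((ae_hasDerivAt_of_locallyLipschitz hγ).mono fun t ht _ ↦
            cauchySchwarzGap_spiralField_deriv ht)
    _ = _ := by
        rw [intervalIntegral.integral_add (hlen.add hG.intervalIntegrable_deriv) harea,
          intervalIntegral.integral_add hlen hG.intervalIntegrable_deriv, hG.integral_deriv_eq_sub,
          intervalIntegral.integral_const_mul, intervalIntegral.integral_const_mul]
        rfl

theorem calibrationDefect_eq_zero_iff (hab : a ≤ b) :
    calibrationDefect l1 l2 T a b γ = 0 ↔ IsCalibrated l1 l2 T a b γ := by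
  rw [calibrationDefect, intervalIntegral.integral_eq_zero_iff_of_le_of_nonneg_ae hab
    (.of_forall fun _ ↦ cauchySchwarzGap_nonneg _ _)
    (intervalIntegrable_cauchySchwarzGap l1 l2 T a b hγ),
    Measure.restrict_congr_set Ioc_ae_eq_Icc, IsCalibrated]
  exact ae_restrict_iff' measurableSet_Icc

end LocallyLipschitz

theorem calibrationDefect_nonneg (hab : a ≤ b) : 0 ≤ calibrationDefect l1 l2 T a b γ :=
  intervalIntegral.integral_nonneg hab fun _ _ ↦ cauchySchwarzGap_nonneg _ _

theorem degLen_le_degLen_iff_calibrationDefect_le {a' b' : ℝ} {γ' : ℝ → ℝ × ℝ} {p q : ℝ × ℝ}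
    (hγ : IsCurve a b γ p q) (hγ' : IsCurve a' b' γ' p q) (hA : sArea a b γ = sArea a' b' γ') :
    degLen (FH l1 l2) a b γ ≤ degLen (FH l1 l2) a' b' γ' ↔
      calibrationDefect l1 l2 T a b γ ≤ calibrationDefect l1 l2 T a' b' γ' := by
  obtain ⟨-, hlip, rfl, rfl⟩ := hγ
  obtain ⟨-, hlip', ha, hb⟩ := hγ'
  rw [calibrationDefect_eq hlip, calibrationDefect_eq hlip', ha, hb, hA, add_le_add_iff_right,
    add_le_add_iff_right, mul_le_mul_iff_right₀ (by positivity)]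

end Calibration

section Positivity

variable {l1 l2 : ℝ} (hl1 : 0 < l1) (hl2 : 0 < l2)
include hl1 hl2

theorem quadWell_pos {p : ℝ × ℝ} (hp : p ≠ 0) : 0 < quadWell l1 l2 p := by
  unfold quadWell
  rcases not_and_or.1 (mt Prod.mk_eq_zero.2 hp) with h | h <;> positivity

theorem quadWell_nonneg (p : ℝ × ℝ) : 0 ≤ quadWell l1 l2 p := by
  unfold quadWell
  positivity

theorem min_mul_norm_sq_le_quadWell (p : ℝ × ℝ) : min l1 l2 * ‖p‖ ^ 2 ≤ quadWell l1 l2 p := by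
  unfold quadWell
  rw [Prod.norm_def]
  rcases max_choice ‖p.1‖ ‖p.2‖ with h | h <;> rw [h, Real.norm_eq_abs, sq_abs]
  · nlinarith [mul_le_mul_of_nonneg_right (min_le_left l1 l2) (sq_nonneg p.1), sq_nonneg p.2]
  · nlinarith [mul_le_mul_of_nonneg_right (min_le_right l1 l2) (sq_nonneg p.2), sq_nonneg p.1]

theorem min_mul_quadWell_le_FH_sq (p : ℝ × ℝ) :
    min l1 l2 * quadWell l1 l2 p ≤ FH l1 l2 p ^ 2 := by
  calc min l1 l2 * quadWell l1 l2 p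
      = min l1 l2 * (l1 * p.1 ^ 2) + min l1 l2 * (l2 * p.2 ^ 2) := mul_add ..
    _ ≤ l1 * (l1 * p.1 ^ 2) + l2 * (l2 * p.2 ^ 2) := by
        gcongr
        exacts [min_le_left l1 l2, min_le_right l1 l2]
    _ = FH l1 l2 p ^ 2 := by rw [FH_sq]; ring

theorem spiralField_ne_zero (T : ℝ) {p : ℝ × ℝ} (hp : p ≠ 0) : spiralField l1 l2 T p ≠ 0 := by
  intro hV
  have hFH : √(1 + T ^ 2) * FH l1 l2 p = 0 := by
    rw [← enorm2_spiralField, hV]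
    simp [enorm2]
  have hFH' : FH l1 l2 p = 0 := (mul_eq_zero.1 hFH).resolve_left (by positivity)
  have hpos : 0 < min l1 l2 * quadWell l1 l2 p :=
    mul_pos (lt_min hl1 hl2) (quadWell_pos hl1 hl2 hp)
  have hle := min_mul_quadWell_le_FH_sq hl1 hl2 p
  rw [hFH', sq, zero_mul] at hle
  exact hpos.not_ge hle

end Positivity

section CalibratedCurves

variable {l1 l2 T a b t : ℝ} {γ : ℝ → ℝ × ℝ} (hl1 : 0 < l1) (hl2 : 0 < l2)
  (hγ : LocallyLipschitz γ) (hcal : IsCalibrated l1 l2 T a b γ)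
include hl1 hl2 hγ hcal

theorem IsCalibrated.ae_hasDerivAt :
    ∀ᵐ t, t ∈ Icc a b → γ t ≠ 0 → HasDerivAt γ
      (-(enorm2 (deriv γ t) / enorm2 (spiralField l1 l2 T (γ t)))
        • spiralField l1 l2 T (γ t)) t := by
  filter_upwards [ae_hasDerivAt_of_locallyLipschitz hγ, hcal] with t hderiv hgap ht hγt
  exact hderiv.congr_deriv <| eq_neg_smul_of_cauchySchwarzGap_eq_zero
    (spiralField_ne_zero hl1 hl2 T hγt) (hgap ht)

theorem IsCalibrated.antitoneOn_quadWell : AntitoneOn (quadWell l1 l2 ∘ γ) (Icc a b) := by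
  refine antitoneOn_of_ae_deriv_nonpos
    ((contDiff_quadWell l1 l2).locallyLipschitz.comp hγ) ?_
  filter_upwards [ae_hasDerivAt_of_locallyLipschitz hγ,
    hcal.ae_hasDerivAt hl1 hl2 hγ] with t hderiv hflow ht
  by_cases hγt : γ t = 0
  · exact ((hasDerivAt_quadWell l1 l2 hderiv).deriv.trans (by simp [hγt])).le
  · refine (hasDerivAt_quadWell_of_smul_spiralField (hflow ht hγt)).deriv.trans_le ?_
    have := enorm2_nonneg (deriv γ t)
    have := enorm2_nonneg (spiralField l1 l2 T (γ t))
    rw [neg_nonpos]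
    positivity

theorem IsCalibrated.ne_zero_of_le (ht : t ∈ Icc a b) (hγt : γ t ≠ 0) {r : ℝ}
    (hr : r ∈ Icc a t) : γ r ≠ 0 := by
  intro hγr
  have hle : quadWell l1 l2 (γ t) ≤ quadWell l1 l2 (γ r) :=
    hcal.antitoneOn_quadWell hl1 hl2 hγ ⟨hr.1, hr.2.trans ht.2⟩ ht hr.2
  rw [hγr, quadWell_zero] at hle
  exact (quadWell_pos hl1 hl2 hγt).not_ge hle

theorem IsCalibrated.exists_eq_linearFlow_neg (ht : t ∈ Icc a b) (hγt : γ t ≠ 0) :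
    ∃ s, 0 ≤ s ∧ γ t = linearFlow (spiralField l1 l2 T) (-s) (γ a) := by
  set V := spiralField l1 l2 T
  have hne : ∀ r ∈ Icc a t, γ r ≠ 0 := fun r ↦ hcal.ne_zero_of_le hl1 hl2 hγ ht hγt
  have hspeed : IntervalIntegrable (fun r ↦ enorm2 (deriv γ r) / enorm2 (V (γ r))) volume a t := by
    simp only [div_eq_inv_mul]
    refine (intervalIntegrable_enorm2_deriv hγ a t).continuousOn_mul ?_
    rw [uIcc_of_le ht.1]
    exact (continuous_enorm2.comp (V.continuous.comp hγ.continuous)).continuousOn.inv₀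
      fun r hr ↦ enorm2_ne_zero (spiralField_ne_zero hl1 hl2 T (hne r hr))
  refine ⟨∫ r in a..t, enorm2 (deriv γ r) / enorm2 (V (γ r)),
    intervalIntegral.integral_nonneg ht.1 fun _ _ ↦ div_nonneg (enorm2_nonneg _) (enorm2_nonneg _),
    ?_⟩
  rw [← intervalIntegral.integral_neg]
  refine eq_linearFlow_of_ae_hasDerivAt V
    (absolutelyContinuousOnInterval_of_locallyLipschitz hγ a t) hspeed.neg ?_
  rw [uIcc_of_le ht.1]
  filter_upwards [hcal.ae_hasDerivAt hl1 hl2 hγ] with r hr hrt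
  exact hr ⟨hrt.1, hrt.2.trans ht.2⟩ (hne r hrt)

end CalibratedCurves

section ExponentialDecay

variable {l1 l2 : ℝ} (hl1 : 0 < l1) (hl2 : 0 < l2)
include hl1 hl2

theorem quadWell_linearFlow_neg_le (T : ℝ) (p : ℝ × ℝ) {s : ℝ} (hs : 0 ≤ s) :
    quadWell l1 l2 (linearFlow (spiralField l1 l2 T) (-s) p) ≤
      quadWell l1 l2 p * Real.exp (-(2 * min l1 l2 * s)) := by
  set m := min l1 l2
  set x : ℝ → ℝ × ℝ := fun s ↦ linearFlow (spiralField l1 l2 T) (-s) p with hx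
  have hxderiv (s : ℝ) : HasDerivAt x (-(1 : ℝ) • spiralField l1 l2 T (x s)) s :=
    (hasDerivAt_linearFlow_apply _ p (-s)).scomp s (hasDerivAt_neg s)
  have hexp (s : ℝ) : HasDerivAt (fun s ↦ Real.exp (2 * m * s))
      (Real.exp (2 * m * s) * (2 * m)) s := by
    simpa using ((hasDerivAt_id s).const_mul (2 * m)).exp
  have hanti : Antitone fun s ↦ quadWell l1 l2 (x s) * Real.exp (2 * m * s) := by
    refine antitone_of_hasDerivAt_nonpos
      (fun s ↦ (hasDerivAt_quadWell_of_smul_spiralField (hxderiv s)).mul (hexp s)) fun s ↦ ?_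
    have := mul_nonneg (sub_nonneg.2 (min_mul_quadWell_le_FH_sq hl1 hl2 (x s)))
      (Real.exp_pos (2 * m * s)).le
    simp only [Pi.zero_apply]
    linarith
  have hle : quadWell l1 l2 (x s) * Real.exp (2 * m * s) ≤ quadWell l1 l2 p := by
    simpa [hx] using hanti hs
  rwa [Real.exp_neg, ← div_eq_mul_inv, le_div_iff₀ (Real.exp_pos _)]

theorem norm_linearFlow_spiralField_neg_le (T : ℝ) (p : ℝ × ℝ) (s : ℝ) (hs : 0 ≤ s) :
    ‖linearFlow (spiralField l1 l2 T) (-s) p‖ ≤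
      √(quadWell l1 l2 p / min l1 l2) * Real.exp (-(min l1 l2 * s)) := by
  have hm : 0 < min l1 l2 := lt_min hl1 hl2
  have hq : 0 ≤ quadWell l1 l2 p := quadWell_nonneg hl1 hl2 p
  refine le_of_sq_le_sq ?_ (by positivity)
  rw [mul_pow, Real.sq_sqrt (by positivity), ← Real.exp_nat_mul, div_mul_eq_mul_div,
    le_div_iff₀' hm]
  calc min l1 l2 * ‖linearFlow (spiralField l1 l2 T) (-s) p‖ ^ 2
      ≤ quadWell l1 l2 (linearFlow (spiralField l1 l2 T) (-s) p) :=
        min_mul_norm_sq_le_quadWell hl1 hl2 _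
    _ ≤ quadWell l1 l2 p * Real.exp (-(2 * min l1 l2 * s)) :=
        quadWell_linearFlow_neg_le hl1 hl2 T p hs
    _ = quadWell l1 l2 p * Real.exp ((2 : ℕ) * -(min l1 l2 * s)) := by
        congr 2
        push_cast
        ring

end ExponentialDecay

section Arclength

variable {l1 l2 T : ℝ} (hl1 : 0 < l1) (hl2 : 0 < l2)
include hl1 hl2

theorem enorm2_spiralField_le {p : ℝ × ℝ} (hp : p ≠ 0) :
    enorm2 (spiralField l1 l2 T p) ≤
      √((1 + T ^ 2) / min l1 l2) * (FH l1 l2 p ^ 2 / √(quadWell l1 l2 p)) := by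
  have hq : 0 < √(quadWell l1 l2 p) := Real.sqrt_pos.2 (quadWell_pos hl1 hl2 hp)
  have hFH : √(min l1 l2) * √(quadWell l1 l2 p) ≤ FH l1 l2 p := by
    rw [← Real.sqrt_mul (lt_min hl1 hl2).le]
    exact Real.sqrt_le_iff.2 ⟨FH_nonneg l1 l2 p, min_mul_quadWell_le_FH_sq hl1 hl2 p⟩
  rw [enorm2_spiralField, Real.sqrt_div (by positivity), div_mul_div_comm,
    le_div_iff₀ (by positivity), mul_assoc]
  gcongr
  rw [sq (FH l1 l2 p)]
  exact mul_le_mul_of_nonneg_left hFH (FH_nonneg l1 l2 p)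

theorem integral_enorm2_deriv_le {a b : ℝ} {γ : ℝ → ℝ × ℝ} {k : ℝ → ℝ} (hab : a ≤ b)
    (hγ : LocallyLipschitz γ) (hne : ∀ t ∈ Ioo a b, γ t ≠ 0) (hk : ∀ t ∈ Ioo a b, 0 ≤ k t)
    (hγ' : ∀ t ∈ Ioo a b, HasDerivAt γ (-k t • spiralField l1 l2 T (γ t)) t) :
    ∫ t in a..b, enorm2 (deriv γ t) ≤
      √((1 + T ^ 2) / min l1 l2) * (√(quadWell l1 l2 (γ a)) - √(quadWell l1 l2 (γ b))) := by
  set c := √((1 + T ^ 2) / min l1 l2)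
  have hcont : Continuous fun t ↦ -(c * √(quadWell l1 l2 (γ t))) := by
    have := (contDiff_quadWell l1 l2).continuous.comp hγ.continuous
    fun_prop
  have hint : IntegrableOn (fun t ↦ enorm2 (deriv γ t)) (Icc a b) :=
    (intervalIntegrable_iff_integrableOn_Icc_of_le hab).1 (intervalIntegrable_enorm2_deriv hγ a b)
  refine (intervalIntegral.integral_le_sub_of_hasDeriv_right_of_le hab hcont.continuousOn
    (fun t ht ↦ (((hasDerivAt_quadWell_of_smul_spiralField (hγ' t ht)).sqrt
      (quadWell_pos hl1 hl2 (hne t ht)).ne').const_mul c).fun_neg.hasDerivWithinAt) hint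
    fun t ht ↦ ?_).trans_eq (by ring)
  calc enorm2 (deriv γ t) = k t * enorm2 (spiralField l1 l2 T (γ t)) := by
        rw [(hγ' t ht).deriv, enorm2_smul, abs_neg, abs_of_nonneg (hk t ht)]
    _ ≤ k t * (c * (FH l1 l2 (γ t) ^ 2 / √(quadWell l1 l2 (γ t)))) :=
        mul_le_mul_of_nonneg_left (enorm2_spiralField_le hl1 hl2 (hne t ht)) (hk t ht)
    _ = _ := by
        rw [neg_div, mul_neg, neg_neg, mul_assoc, mul_div_mul_left _ _ two_ne_zero]
        ring

end Arclength

section SpiralArc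

/-- The flow line of `-spiralField l1 l2 T` from `p` into the origin, parametrized by `[0, 1]`: the
minimizer of the degenerate length among curves from `p` to the origin of the same signed area. -/
def spiralArc (l1 l2 T : ℝ) (p : ℝ × ℝ) : ℝ → ℝ × ℝ :=
  decayArc (spiralField l1 l2 T) (min l1 l2) p

theorem spiralArc_ne_zero (l1 l2 T : ℝ) {p : ℝ × ℝ} (hp : p ≠ 0) {t : ℝ} (ht : t < 1) :
    spiralArc l1 l2 T p t ≠ 0 :=
  decayArc_ne_zero hp ht

variable {l1 l2 : ℝ} (T : ℝ) (p : ℝ × ℝ) (hl1 : 0 < l1) (hl2 : 0 < l2)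
include hl1 hl2

theorem hasDerivAt_spiralArc (t : ℝ) :
    HasDerivAt (spiralArc l1 l2 T p)
      (-(2 / min l1 l2 / (1 - t)) • spiralField l1 l2 T (spiralArc l1 l2 T p t)) t :=
  hasDerivAt_decayArc (lt_min hl1 hl2) (norm_linearFlow_spiralField_neg_le hl1 hl2 T p) t

theorem isCurve_spiralArc : IsCurve 0 1 (spiralArc l1 l2 T p) p 0 :=
  ⟨zero_le_one,
    (contDiff_decayArc (lt_min hl1 hl2)
      (norm_linearFlow_spiralField_neg_le hl1 hl2 T p)).locallyLipschitz,
    decayArc_zero_right, decayArc_of_one_le le_rfl⟩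

theorem sArea_spiralArc :
    sArea 0 1 (spiralArc l1 l2 T p) = -areaPotential l1 l2 T p := by
  obtain ⟨-, hlip, hzero, hone⟩ := isCurve_spiralArc T p hl1 hl2
  rw [sArea_eq_sub_areaPotential (by positivity) hlip (hasDerivAt_spiralArc T p hl1 hl2), hzero,
    hone]
  simp [areaPotential, quadWell_zero]

theorem isCalibrated_spiralArc : IsCalibrated l1 l2 T 0 1 (spiralArc l1 l2 T p) := by
  refine .of_forall fun t ht ↦ ?_
  have hspeed : 0 ≤ 2 / min l1 l2 / (1 - t) :=
    div_nonneg (div_nonneg zero_le_two (lt_min hl1 hl2).le) (sub_nonneg.2 ht.2)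
  rw [(hasDerivAt_spiralArc T p hl1 hl2 t).deriv]
  exact cauchySchwarzGap_neg_smul_self hspeed _

theorem strictAntiOn_quadWell_spiralArc {p : ℝ × ℝ} (hp : p ≠ 0) :
    StrictAntiOn (quadWell l1 l2 ∘ spiralArc l1 l2 T p) (Icc 0 1) := by
  obtain ⟨-, hlip, -⟩ := isCurve_spiralArc T p hl1 hl2
  refine strictAntiOn_of_deriv_neg (convex_Icc 0 1)
    ((contDiff_quadWell l1 l2).continuous.comp hlip.continuous).continuousOn fun t ht ↦ ?_
  rw [interior_Icc] at ht
  have hm : 0 < min l1 l2 := lt_min hl1 hl2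
  have hspeed : 0 < 2 / min l1 l2 / (1 - t) := div_pos (by positivity) (sub_pos.2 ht.2)
  have hFH : 0 < FH l1 l2 (spiralArc l1 l2 T p t) ^ 2 :=
    (mul_pos hm (quadWell_pos hl1 hl2 (spiralArc_ne_zero l1 l2 T hp ht.2))).trans_le
      (min_mul_quadWell_le_FH_sq hl1 hl2 _)
  refine (hasDerivAt_quadWell_of_smul_spiralField
    (hasDerivAt_spiralArc T p hl1 hl2 t)).deriv.trans_lt ?_
  rw [neg_neg_iff_pos]
  positivity

theorem integral_enorm2_deriv_spiralArc_le {p : ℝ × ℝ} (hp : p ≠ 0) :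
    ∫ t in (0 : ℝ)..1, enorm2 (deriv (spiralArc l1 l2 T p) t) ≤
      √((1 + T ^ 2) / min l1 l2) * √(quadWell l1 l2 p) := by
  obtain ⟨-, hlip, hzero, hone⟩ := isCurve_spiralArc T p hl1 hl2
  have hlength := integral_enorm2_deriv_le hl1 hl2 zero_le_one hlip
    (fun t ht ↦ spiralArc_ne_zero l1 l2 T hp ht.2)
    (fun t ht ↦ div_nonneg (div_nonneg zero_le_two (lt_min hl1 hl2).le) (sub_nonneg.2 ht.2.le))
    (fun t _ ↦ hasDerivAt_spiralArc T p hl1 hl2 t)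
  rwa [hzero, hone, quadWell_zero, Real.sqrt_zero, sub_zero] at hlength

theorem exists_sArea_spiralArc_eq {p : ℝ × ℝ} (hp : p ≠ 0) (A : ℝ) :
    ∃ T, sArea 0 1 (spiralArc l1 l2 T p) = A := by
  have hq : quadWell l1 l2 p ≠ 0 := (quadWell_pos hl1 hl2 hp).ne'
  refine ⟨-(2 * (l1 + l2) * A + 2 * l2 * (p.1 * p.2)) / quadWell l1 l2 p, ?_⟩
  rw [sArea_spiralArc _ p hl1 hl2, areaPotential]
  field_simp
  ring

end SpiralArc

section Reparametrization

theorem sameCurve_of_mapsTo_image {q : ℝ × ℝ → ℝ} {a b c d : ℝ} {f g : ℝ → ℝ × ℝ} (hab : a ≤ b)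
    (hcd : c ≤ d) (hf : ContinuousOn f (Icc a b)) (hg : ContinuousOn g (Icc c d))
    (hqf : AntitoneOn (q ∘ f) (Icc a b)) (hqg : StrictAntiOn (q ∘ g) (Icc c d))
    (hleft : f a = g c) (hright : f b = g d) (hmaps : MapsTo f (Icc a b) (g '' Icc c d)) :
    SameCurve a b f c d g := by
  have hlift : ∀ t ∈ Icc a b, ∃ s ∈ Icc c d, g s = f t := hmaps
  choose! φ hφ hgφ using hlift
  have hinj : InjOn g (Icc c d) := hqg.injOn.of_comp
  have hemb : IsClosedEmbedding ((Icc c d).domRestrict g) :=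
    hg.domRestrict.isClosedEmbedding hinj.injective
  refine ⟨φ, fun s hs t ht hst ↦ ?_, ?_, ?_, ?_, fun t ht ↦ (hgφ t ht).symm⟩
  · refine (hqg.le_iff_ge (hφ t ht) (hφ s hs)).1 ?_
    simpa only [Function.comp_apply, hgφ s hs, hgφ t ht] using hqf hs ht hst
  · rw [continuousOn_iff_continuous_domRestrict] at hf ⊢
    have hφcont : Continuous (MapsTo.restrict φ (Icc a b) (Icc c d) hφ) :=
      hemb.continuous_iff.2 (hf.congr fun t ↦ (hgφ t t.2).symm)
    exact continuous_subtype_val.comp hφcont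
  · have ha := left_mem_Icc.2 hab
    exact hinj (hφ a ha) (left_mem_Icc.2 hcd) ((hgφ a ha).trans hleft)
  · have hb := right_mem_Icc.2 hab
    exact hinj (hφ b hb) (right_mem_Icc.2 hcd) ((hgφ b hb).trans hright)

end Reparametrization

section Minimality

variable {l1 l2 T a b : ℝ} {p : ℝ × ℝ} {γ : ℝ → ℝ × ℝ} (hl1 : 0 < l1) (hl2 : 0 < l2)
  (hγ : IsCurve a b γ p 0)
include hl1 hl2 hγ

theorem IsCalibrated.sameCurve_spiralArc (hp : p ≠ 0) (hcal : IsCalibrated l1 l2 T a b γ) :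
    SameCurve a b γ 0 1 (spiralArc l1 l2 T p) := by
  obtain ⟨-, hlip, hzero, hone⟩ := isCurve_spiralArc T p hl1 hl2
  obtain ⟨hab, hγlip, rfl, hγb⟩ := hγ
  refine sameCurve_of_mapsTo_image hab zero_le_one hγlip.continuous.continuousOn
    hlip.continuous.continuousOn (hcal.antitoneOn_quadWell hl1 hl2 hγlip)
    (strictAntiOn_quadWell_spiralArc T hl1 hl2 hp) hzero.symm (hγb.trans hone.symm) fun t ht ↦ ?_
  by_cases hγt : γ t = 0
  · exact ⟨1, right_mem_Icc.2 zero_le_one, hone.trans hγt.symm⟩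
  · obtain ⟨s, hs, hflow⟩ := hcal.exists_eq_linearFlow_neg hl1 hl2 hγlip ht hγt
    obtain ⟨r, hr, harc⟩ := exists_decayArc_eq_linearFlow_neg (spiralField l1 l2 T) (γ a)
      (lt_min hl1 hl2) hs
    exact ⟨r, Ico_subset_Icc_self hr, harc.trans hflow.symm⟩

variable (hA : sArea a b γ = sArea 0 1 (spiralArc l1 l2 T p))
include hA

theorem degLen_spiralArc_le :
    degLen (FH l1 l2) 0 1 (spiralArc l1 l2 T p) ≤ degLen (FH l1 l2) a b γ := by
  have hcurve := isCurve_spiralArc T p hl1 hl2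
  rw [degLen_le_degLen_iff_calibrationDefect_le (T := T) hcurve hγ hA.symm,
    (calibrationDefect_eq_zero_iff hcurve.2.1 zero_le_one).2 (isCalibrated_spiralArc T p hl1 hl2)]
  exact calibrationDefect_nonneg hγ.1

theorem sameCurve_spiralArc_of_degLen_le (hp : p ≠ 0)
    (hle : degLen (FH l1 l2) a b γ ≤ degLen (FH l1 l2) 0 1 (spiralArc l1 l2 T p)) :
    SameCurve a b γ 0 1 (spiralArc l1 l2 T p) := by
  have hcurve := isCurve_spiralArc T p hl1 hl2
  rw [degLen_le_degLen_iff_calibrationDefect_le (T := T) hγ hcurve hA,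
    (calibrationDefect_eq_zero_iff hcurve.2.1 zero_le_one).2 (isCalibrated_spiralArc T p hl1 hl2)]
    at hle
  exact IsCalibrated.sameCurve_spiralArc hl1 hl2 hγ hp <|
    (calibrationDefect_eq_zero_iff hγ.2.1 hγ.1).1 (hle.antisymm (calibrationDefect_nonneg hγ.1))

end Minimality

/-- for the homogeneous factor `F_H` and any `A ∈ ℝ`, `p₀ ≠ (0,0)`, the
isoperimetric problem from `p₀` to the origin has a minimizer, unique up to
orientation-preserving reparametrization, which meets the origin only at its terminal endpoint
and has finite Euclidean arclength bounded by a constant. -/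
theorem quadratic_one_well_minimizer (l1 l2 : ℝ) (hl1 : 0 < l1) (hl2 : 0 < l2)
    (A : ℝ) (p0 : ℝ × ℝ) (hp0 : p0 ≠ (0, 0)) :
    ∃ a b γ, IsCurve a b γ p0 (0, 0) ∧ sArea a b γ = A ∧
      (∀ a' b' γ', IsCurve a' b' γ' p0 (0, 0) → sArea a' b' γ' = A →
        degLen (FH l1 l2) a b γ ≤ degLen (FH l1 l2) a' b' γ') ∧
      (∀ a' b' γ', IsCurve a' b' γ' p0 (0, 0) → sArea a' b' γ' = A →
        degLen (FH l1 l2) a' b' γ' ≤ degLen (FH l1 l2) a b γ →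
        SameCurve a' b' γ' a b γ) ∧
      (∀ t : ℝ, a ≤ t → t < b → γ t ≠ (0, 0)) ∧
      (∃ C : ℝ, (∫ t in a..b, enorm2 (deriv γ t)) ≤ C) := by
  obtain ⟨T, hT⟩ := exists_sArea_spiralArc_eq hl1 hl2 hp0 A
  exact ⟨0, 1, spiralArc l1 l2 T p0, isCurve_spiralArc T p0 hl1 hl2, hT,
    fun a' b' γ' hγ' hA ↦ degLen_spiralArc_le hl1 hl2 hγ' (hA.trans hT.symm),
    fun a' b' γ' hγ' hA ↦ sameCurve_spiralArc_of_degLen_le hl1 hl2 hγ' (hA.trans hT.symm) hp0,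
    fun t _ ht ↦ spiralArc_ne_zero l1 l2 T hp0 ht,
    √((1 + T ^ 2) / min l1 l2) * √(quadWell l1 l2 p0),
    integral_enorm2_deriv_spiralArc_le T hl1 hl2 hp0⟩
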